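/- Let d ≥ 1, λ ≥ 1, T ≥ 1, and A_1,…,A_T ∈ ℝ^d with ‖A_t‖₂ ≤ 1 for all t, and let f_1 ≤ f_2 ≤ … ≤ f_T be nonnegative reals. Then Σ_{t=1}^T f_t · ‖A_t‖_{V_t(λ)^{-1}} ≤ f_T · √(2 d T log((dλ + T)/(dλ))). -/

import Mathlib

open Finset Matrix

/-- `mnorm M x = √(xᵀ M x)`, the norm associated to a positive definite matrix `M`. -/
noncomputable def mnorm {d : ℕ} (M : Matrix (Fin d) (Fin d) ℝ) (x : Fin d → ℝ) : ℝ :=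
  Real.sqrt (x ⬝ᵥ M.mulVec x)

/-- `Vmat A lam t = lam • I + ∑_{s=1}^{t-1} A_s A_sᵀ`. -/
noncomputable def Vmat {d : ℕ} (A : ℕ → Fin d → ℝ) (lam : ℝ) (t : ℕ) :
    Matrix (Fin d) (Fin d) ℝ :=
  lam • (1 : Matrix (Fin d) (Fin d) ℝ) + ∑ s ∈ Finset.Ico 1 t, vecMulVec (A s) (A s)

/-!
Adding `A_t A_tᵀ` to `V_t` multiplies the determinant by `1 + ‖A_t‖²_{V_t⁻¹}`, so the product of
these factors is `det V_{T+1} / lam ^ d`. AM-GM on the eigenvalues bounds this determinant by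
`(tr V_{T+1} / d) ^ d`, and the trace grows additively. Since `x ≤ 2 log (1 + x)` on `[0, 2]`, the
logarithm of the product controls `∑ ‖A_t‖²_{V_t⁻¹}`, and Cauchy-Schwarz passes to the sum of the
norms themselves.
-/

section MatrixInequalities

variable {n : Type*} [Fintype n] [DecidableEq n]

theorem det_add_vecMulVec {R : Type*} [CommRing R] {M : Matrix n n R} (hM : IsUnit M.det)
    (u v : n → R) : (M + vecMulVec u v).det = M.det * (1 + v ⬝ᵥ M⁻¹ *ᵥ u) := by
  rw [vecMulVec_eq Unit, det_add_replicateCol_mul_replicateRow hM, Matrix.mul_assoc,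
    ← replicateCol_mulVec, det_unique (n := Unit), Matrix.add_apply, one_apply_eq,
    replicateRow_mul_replicateCol_apply]

theorem det_le_trace_div_card_pow {M : Matrix n n ℝ} (hM : M.PosSemidef) :
    M.det ≤ (M.trace / Fintype.card n) ^ Fintype.card n := by
  rcases isEmpty_or_nonempty n with hn | hn
  · simp
  have hdet : M.det = ∏ i, hM.isHermitian.eigenvalues i := by
    simpa using hM.isHermitian.det_eq_prod_eigenvalues
  have htrace : M.trace = ∑ i, hM.isHermitian.eigenvalues i := by
    simpa using hM.isHermitian.trace_eq_sum_eigenvalues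
  have hprod : 0 ≤ ∏ i, hM.isHermitian.eigenvalues i :=
    prod_nonneg fun i _ => hM.eigenvalues_nonneg i
  have amgm := Real.geom_mean_le_arith_mean univ (fun _ => 1) hM.isHermitian.eigenvalues
    (fun _ _ => zero_le_one) (by simp [Fintype.card_pos]) fun i _ => hM.eigenvalues_nonneg i
  simp only [Real.rpow_one, one_mul, sum_const, card_univ, nsmul_eq_mul, mul_one] at amgm
  rw [hdet, htrace]
  calc ∏ i, hM.isHermitian.eigenvalues i
      = ((∏ i, hM.isHermitian.eigenvalues i) ^ (Fintype.card n : ℝ)⁻¹) ^ Fintype.card n :=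
        (Real.rpow_inv_natCast_pow hprod Fintype.card_ne_zero).symm
    _ ≤ _ := pow_le_pow_left₀ (Real.rpow_nonneg hprod _) amgm _

theorem mul_dotProduct_inv_mulVec_le {S : Matrix n n ℝ} (hS : S.PosSemidef) {lam : ℝ}
    (hlam : 0 < lam) (x : n → ℝ) :
    lam * (x ⬝ᵥ (lam • (1 : Matrix n n ℝ) + S)⁻¹ *ᵥ x) ≤ x ⬝ᵥ x := by
  have hdet : IsUnit (lam • (1 : Matrix n n ℝ) + S).det :=
    ((PosDef.one.smul hlam).add_posSemidef hS).det_pos.ne'.isUnit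
  set y := (lam • (1 : Matrix n n ℝ) + S)⁻¹ *ᵥ x with hy
  have hx : lam • y + S *ᵥ y = x := by
    rw [← one_mulVec x, ← mul_nonsing_inv _ hdet, ← mulVec_mulVec, ← hy, add_mulVec, smul_mulVec,
      one_mulVec]
  have hyx : lam * (y ⬝ᵥ y) ≤ x ⬝ᵥ y := by
    have hSy : 0 ≤ y ⬝ᵥ S *ᵥ y := by simpa using hS.dotProduct_mulVec_nonneg y
    rw [dotProduct_comm x y, ← hx, dotProduct_add, dotProduct_smul, smul_eq_mul]
    exact le_add_of_nonneg_right hSy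
  have hsq : 0 ≤ x ⬝ᵥ x - 2 * lam * (x ⬝ᵥ y) + lam * (lam * (y ⬝ᵥ y)) := by
    calc 0 ≤ (x - lam • y) ⬝ᵥ (x - lam • y) := by
          simpa using dotProduct_star_self_nonneg (x - lam • y)
      _ = _ := by
          simp only [sub_dotProduct, dotProduct_sub, smul_dotProduct, dotProduct_smul, smul_eq_mul,
            dotProduct_comm y x]
          ring
  linarith [mul_le_mul_of_nonneg_left hyx hlam.le]

end MatrixInequalities

theorem le_two_mul_log_one_add {x : ℝ} (hx₀ : 0 ≤ x) (hx₂ : x ≤ 2) :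
    x ≤ 2 * Real.log (1 + x) := by
  have hx : x / 2 ≤ 2 * x / (x + 2) := by
    rw [div_le_div_iff₀ two_pos (by linarith)]
    nlinarith
  linarith [Real.le_log_one_add_of_nonneg hx₀]

section EllipticalPotential

variable {d : ℕ}

theorem mnorm_nonneg (M : Matrix (Fin d) (Fin d) ℝ) (x : Fin d → ℝ) : 0 ≤ mnorm M x :=
  Real.sqrt_nonneg _

theorem sq_mnorm {M : Matrix (Fin d) (Fin d) ℝ} (hM : M.PosSemidef) (x : Fin d → ℝ) :
    mnorm M x ^ 2 = x ⬝ᵥ M *ᵥ x :=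
  Real.sq_sqrt (by simpa using hM.dotProduct_mulVec_nonneg x)

variable (A : ℕ → Fin d → ℝ) {lam : ℝ}

theorem posSemidef_sum_vecMulVec_self (s : Finset ℕ) :
    (∑ t ∈ s, vecMulVec (A t) (A t)).PosSemidef :=
  posSemidef_sum _ fun t _ => by simpa using posSemidef_vecMulVec_self_star (A t)

theorem posDef_Vmat (hlam : 0 < lam) (t : ℕ) : (Vmat A lam t).PosDef :=
  (PosDef.one.smul hlam).add_posSemidef (posSemidef_sum_vecMulVec_self A _)

theorem mul_sq_mnorm_Vmat_inv_le (hlam : 0 < lam) (t : ℕ) (x : Fin d → ℝ) :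
    lam * mnorm (Vmat A lam t)⁻¹ x ^ 2 ≤ x ⬝ᵥ x := by
  rw [sq_mnorm (posDef_Vmat A hlam t).inv.posSemidef]
  exact mul_dotProduct_inv_mulVec_le (posSemidef_sum_vecMulVec_self A _) hlam x

theorem trace_Vmat (lam : ℝ) (t : ℕ) :
    (Vmat A lam t).trace = d * lam + ∑ s ∈ Ico 1 t, A s ⬝ᵥ A s := by
  simp only [Vmat, trace_add, trace_smul, trace_one, trace_sum, trace_vecMulVec, Fintype.card_fin,
    smul_eq_mul, mul_comm]

theorem det_Vmat_succ (hlam : 0 < lam) {t : ℕ} (ht : 1 ≤ t) :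
    (Vmat A lam (t + 1)).det
      = (Vmat A lam t).det * (1 + mnorm (Vmat A lam t)⁻¹ (A t) ^ 2) := by
  have hV := posDef_Vmat A hlam t
  have hsucc : Vmat A lam (t + 1) = Vmat A lam t + vecMulVec (A t) (A t) := by
    rw [Vmat, sum_Ico_succ_top ht, ← add_assoc, Vmat]
  rw [hsucc, det_add_vecMulVec hV.det_pos.ne'.isUnit, sq_mnorm hV.inv.posSemidef]

theorem det_Vmat_eq_prod (hlam : 0 < lam) (T : ℕ) :
    (Vmat A lam (T + 1)).det
      = lam ^ d * ∏ t ∈ Icc 1 T, (1 + mnorm (Vmat A lam t)⁻¹ (A t) ^ 2) := by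
  induction T with
  | zero => simp [Vmat]
  | succ T ih =>
    rw [det_Vmat_succ A hlam (by simp), ih, prod_Icc_succ_top (by simp), mul_assoc]

theorem prod_one_add_sq_mnorm_Vmat_inv_le (hlam : 0 < lam) (T : ℕ) :
    ∏ t ∈ Icc 1 T, (1 + mnorm (Vmat A lam t)⁻¹ (A t) ^ 2)
      ≤ ((d * lam + ∑ t ∈ Icc 1 T, A t ⬝ᵥ A t) / (d * lam)) ^ d := by
  have hdet := det_le_trace_div_card_pow (posDef_Vmat A hlam (T + 1)).posSemidef
  rw [det_Vmat_eq_prod A hlam, trace_Vmat, Fintype.card_fin, Ico_add_one_right_eq_Icc] at hdet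
  rwa [← div_div, div_pow _ lam, le_div_iff₀' (by positivity)]

variable {A} {L : ℝ} {T : ℕ}

theorem sum_sq_mnorm_Vmat_inv_le (hlam : 0 < lam) (hL : L ^ 2 ≤ 2 * lam)
    (hA : ∀ t ∈ Icc 1 T, A t ⬝ᵥ A t ≤ L ^ 2) :
    ∑ t ∈ Icc 1 T, mnorm (Vmat A lam t)⁻¹ (A t) ^ 2
      ≤ 2 * d * Real.log ((d * lam + T * L ^ 2) / (d * lam)) := by
  have hle_two : ∀ t ∈ Icc 1 T, mnorm (Vmat A lam t)⁻¹ (A t) ^ 2 ≤ 2 := fun t ht => by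
    refine le_of_mul_le_mul_left ?_ hlam
    linarith [mul_sq_mnorm_Vmat_inv_le A hlam t (A t), hA t ht]
  have hsum : ∑ t ∈ Icc 1 T, A t ⬝ᵥ A t ≤ T * L ^ 2 := by
    simpa using sum_le_card_nsmul _ _ _ hA
  have hsum_nonneg : 0 ≤ ∑ t ∈ Icc 1 T, A t ⬝ᵥ A t :=
    sum_nonneg fun t _ => by simpa using dotProduct_star_self_nonneg (A t)
  calc ∑ t ∈ Icc 1 T, mnorm (Vmat A lam t)⁻¹ (A t) ^ 2
      ≤ ∑ t ∈ Icc 1 T, 2 * Real.log (1 + mnorm (Vmat A lam t)⁻¹ (A t) ^ 2) :=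
        sum_le_sum fun t ht => le_two_mul_log_one_add (sq_nonneg _) (hle_two t ht)
    _ = 2 * Real.log (∏ t ∈ Icc 1 T, (1 + mnorm (Vmat A lam t)⁻¹ (A t) ^ 2)) := by
        rw [← mul_sum, Real.log_prod fun t _ => by positivity]
    _ ≤ 2 * Real.log (((d * lam + T * L ^ 2) / (d * lam)) ^ d) := by
        gcongr
        exact (prod_one_add_sq_mnorm_Vmat_inv_le A hlam T).trans (by gcongr)
    _ = 2 * d * Real.log ((d * lam + T * L ^ 2) / (d * lam)) := by
        rw [Real.log_pow, mul_assoc]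

theorem sum_mnorm_Vmat_inv_le (hlam : 0 < lam) (hL : L ^ 2 ≤ 2 * lam)
    (hA : ∀ t ∈ Icc 1 T, A t ⬝ᵥ A t ≤ L ^ 2) :
    ∑ t ∈ Icc 1 T, mnorm (Vmat A lam t)⁻¹ (A t)
      ≤ √(2 * d * T * Real.log ((d * lam + T * L ^ 2) / (d * lam))) := by
  refine Real.le_sqrt_of_sq_le ?_
  calc (∑ t ∈ Icc 1 T, mnorm (Vmat A lam t)⁻¹ (A t)) ^ 2
      ≤ T * ∑ t ∈ Icc 1 T, mnorm (Vmat A lam t)⁻¹ (A t) ^ 2 := by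
        simpa using sq_sum_le_card_mul_sum_sq (s := Icc 1 T)
          (f := fun t => mnorm (Vmat A lam t)⁻¹ (A t))
    _ ≤ T * (2 * d * Real.log ((d * lam + T * L ^ 2) / (d * lam))) := by
        gcongr
        exact sum_sq_mnorm_Vmat_inv_le hlam hL hA
    _ = 2 * d * T * Real.log ((d * lam + T * L ^ 2) / (d * lam)) := by ring

end EllipticalPotential

theorem weighted_elliptical_potential_sum_general
    {d : ℕ} {lam L : ℝ} (hlam : 0 < lam) (hL : L ^ 2 ≤ 2 * lam) {T : ℕ}
    {A : ℕ → Fin d → ℝ} (hA : ∀ t ∈ Icc 1 T, √(A t ⬝ᵥ A t) ≤ L)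
    {f : ℕ → ℝ} {F : ℝ} (hF : 0 ≤ F) (hf : ∀ t ∈ Icc 1 T, f t ≤ F) :
    ∑ t ∈ Icc 1 T, f t * mnorm (Vmat A lam t)⁻¹ (A t) ≤
      F * √(2 * d * T * Real.log ((d * lam + T * L ^ 2) / (d * lam))) :=
  calc ∑ t ∈ Icc 1 T, f t * mnorm (Vmat A lam t)⁻¹ (A t)
      ≤ ∑ t ∈ Icc 1 T, F * mnorm (Vmat A lam t)⁻¹ (A t) :=
        sum_le_sum fun t ht => mul_le_mul_of_nonneg_right (hf t ht) (mnorm_nonneg _ _)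
    _ = F * ∑ t ∈ Icc 1 T, mnorm (Vmat A lam t)⁻¹ (A t) := (mul_sum ..).symm
    _ ≤ F * √(2 * d * T * Real.log ((d * lam + T * L ^ 2) / (d * lam))) :=
        mul_le_mul_of_nonneg_left
          (sum_mnorm_Vmat_inv_le hlam hL fun t ht => (Real.sqrt_le_iff.1 (hA t ht)).2) hF

theorem weighted_elliptical_potential_sum
    {d : ℕ} (hd : 1 ≤ d) (lam : ℝ) (hlam : 1 ≤ lam) (T : ℕ) (hT : 1 ≤ T)
    (A : ℕ → Fin d → ℝ) (hA : ∀ t ∈ Finset.Icc 1 T, Real.sqrt (A t ⬝ᵥ A t) ≤ 1)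
    (f : ℕ → ℝ) (hfnonneg : ∀ t ∈ Finset.Icc 1 T, 0 ≤ f t)
    (hfmono : ∀ s t : ℕ, 1 ≤ s → s ≤ t → t ≤ T → f s ≤ f t) :
    ∑ t ∈ Finset.Icc 1 T, f t * mnorm (Vmat A lam t)⁻¹ (A t) ≤
      f T * Real.sqrt (2 * d * T * Real.log ((d * lam + T) / (d * lam))) := by
  simpa using weighted_elliptical_potential_sum_general (L := 1) (by linarith) (by linarith) hA
    (hfnonneg T (right_mem_Icc.2 hT)) fun t ht =>
      hfmono t T (mem_Icc.1 ht).1 (mem_Icc.1 ht).2 le_rfl
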